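/- arXiv:1412.3691 — 3 statements merged into one kernel-verified Lean document; each statement's English description precedes it below -/
import Mathlib

section
/- The Scharfetter–Gummel stabilization function is nonnegative: for every real X ≠ 0, B(X) + X/2 ≥ 1; consequently Φ(Pe) = B(2Pe) + Pe − 1 ≥ 0 for every Pe ≠ 0. -/
/-- The Bernoulli-type function `B(Z) = Z/(exp Z − 1)` for `Z ≠ 0`, with `B(0) = 1`. -/
noncomputable def sgBern (Z : ℝ) : ℝ := if Z = 0 then 1 else Z / (Real.exp Z - 1)

theorem sg_aux_mono : Monotone (fun x : ℝ => x * (Real.exp x + 1) - 2 * (Real.exp x - 1)) := by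
  have hd : ∀ x : ℝ, HasDerivAt (fun x : ℝ => x * (Real.exp x + 1) - 2 * (Real.exp x - 1))
      (1 * (Real.exp x + 1) + x * Real.exp x - 2 * Real.exp x) x := fun x =>
    ((hasDerivAt_id x).mul ((Real.hasDerivAt_exp x).add_const 1)).sub
      (((Real.hasDerivAt_exp x).sub_const 1).const_mul 2)
  apply monotone_of_deriv_nonneg (fun x => (hd x).differentiableAt)
  intro x
  rw [(hd x).deriv]
  have h1 := Real.add_one_le_exp (-x)
  have h2 := Real.exp_pos x
  have h3 : Real.exp x * Real.exp (-x) = 1 := by rw [← Real.exp_add]; simp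
  nlinarith [mul_le_mul_of_nonneg_left h1 h2.le]

theorem sg_aux (X : ℝ) (hX : X ≠ 0) : 1 ≤ sgBern X + X / 2 := by
  have key : sgBern X + X / 2 - 1
      = (X * (Real.exp X + 1) - 2 * (Real.exp X - 1)) / (2 * (Real.exp X - 1)) := by
    have : Real.exp X - 1 ≠ 0 := by
      rw [sub_ne_zero]; simpa using hX
    rw [sgBern, if_neg hX]
    field_simp
    ring
  have h : 0 ≤ sgBern X + X / 2 - 1 := by
    rw [key]
    rcases le_total 0 X with h0 | h0
    · have h1 := sg_aux_mono h0
      have h2 := Real.one_le_exp h0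
      simp at h1
      exact div_nonneg (by linarith) (by linarith)
    · have h1 := sg_aux_mono h0
      have h2 := Real.exp_le_one_iff.2 h0
      simp at h1
      exact div_nonneg_of_nonpos (by linarith) (by linarith)
  linarith

/-- Nonnegativity of the Scharfetter–Gummel stabilization function: for every real
`X ≠ 0`, `B(X) + X/2 ≥ 1`; consequently `Φ(Pe) = B(2Pe) + Pe − 1 ≥ 0` for `Pe ≠ 0`. -/
theorem sg_stabilization_nonneg :
    (∀ X : ℝ, X ≠ 0 → 1 ≤ sgBern X + X / 2) ∧
    (∀ Pe : ℝ, Pe ≠ 0 → 0 ≤ sgBern (2 * Pe) + Pe - 1) := by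
  refine ⟨sg_aux, fun P hP => ?_⟩
  have := sg_aux (2 * P) (by simpa using hP)
  linarith
end

section
/- Exactness of the Scharfetter–Gummel scheme at thermal equilibrium: let V > 0, μ > 0, C > 0, h > 0, D = μV, and let φ₁ ≠ φ₂ be two real potential values with nodal carrier densities n₁ = C·exp(φ₁/V) and n₂ = C·exp(φ₂/V). Set Pe = |φ₂ − φ₁|/(2V) and Φ(Pe) = B(2Pe) + Pe − 1. Then the stabilized 1D flux vanishes exactly: μ·((n₁ + n₂)/2)·(−(φ₂ − φ₁)/h) + D·(1 + Φ(Pe))·(n₂ − n₁)/h = 0. -/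
theorem sg_aux_s6 (t : ℝ) (ht : t ≠ 0) :
    sgBern |t| + |t| / 2 = t / 2 * (Real.exp t + 1) / (Real.exp t - 1) := by
  have h1 : Real.exp t - 1 ≠ 0 := by
    intro h
    exact ht ((Real.exp_eq_one_iff t).1 (by linarith))
  unfold sgBern
  rw [if_neg (abs_ne_zero.2 ht)]
  rcases abs_choice t with h | h
  · rw [h]
    field_simp
    ring
  · rw [h, Real.exp_neg]
    have h0 := Real.exp_ne_zero t
    have h2 : (Real.exp t)⁻¹ - 1 ≠ 0 := by
      intro h
      apply h1
      have : (Real.exp t)⁻¹ = 1 := by linarith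
      rw [inv_eq_one] at this
      linarith
    have h3 : (1 : ℝ) - Real.exp t ≠ 0 := fun h => h1 (by linarith)
    have h4 : (Real.exp t)⁻¹ - 1 = -(Real.exp t - 1) / Real.exp t := by
      field_simp
      ring
    rw [h4]
    field_simp
    ring

/-- Exactness of the Scharfetter–Gummel scheme at thermal equilibrium: on nodal data
`n_j = C·exp(φ_j/V)` the artificial-diffusion stabilized 1D flux vanishes exactly. -/
theorem sg_flux_vanishes_at_equilibrium
    (V μ C h D φ₁ φ₂ n₁ n₂ Pe : ℝ)
    (hV : 0 < V) (hμ : 0 < μ) (hC : 0 < C) (hh : 0 < h) (hD : D = μ * V)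
    (hφ : φ₁ ≠ φ₂)
    (hn₁ : n₁ = C * Real.exp (φ₁ / V)) (hn₂ : n₂ = C * Real.exp (φ₂ / V))
    (hPe : Pe = |φ₂ - φ₁| / (2 * V)) :
    μ * ((n₁ + n₂) / 2) * (-(φ₂ - φ₁) / h) +
      D * (1 + (sgBern (2 * Pe) + Pe - 1)) * ((n₂ - n₁) / h) = 0 := by
  have hd : φ₂ - φ₁ ≠ 0 := sub_ne_zero.2 hφ.symm
  obtain ⟨t, ht⟩ : ∃ t, t = (φ₂ - φ₁) / V := ⟨_, rfl⟩
  have ht0 : t ≠ 0 := by rw [ht]; exact div_ne_zero hd hV.ne'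
  have hdt : φ₂ - φ₁ = V * t := by rw [ht]; field_simp
  have hP : Pe = |t| / 2 := by
    rw [hPe, hdt, abs_mul, abs_of_pos hV]
    field_simp
  have h1 : Real.exp t - 1 ≠ 0 := by
    intro h
    exact ht0 ((Real.exp_eq_one_iff t).1 (by linarith))
  have hn : n₂ = n₁ * Real.exp t := by
    rw [hn₁, hn₂, mul_assoc, ← Real.exp_add, ht]
    congr 2
    ring
  have hk : 1 + (sgBern (2 * Pe) + Pe - 1)
      = t / 2 * (Real.exp t + 1) / (Real.exp t - 1) := by
    rw [← sg_aux_s6 t ht0, hP, mul_div_cancel₀ _ (two_ne_zero)]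
    ring
  rw [hk, hdt, hn, hD]
  field_simp
  ring
end

section
/- Equivalence of the stabilized flux with the classic 1D Scharfetter–Gummel formula: let V > 0, μ > 0, h > 0, D = μV, φ₁ ≠ φ₂, and let n₁, n₂ be arbitrary real nodal densities. Set X = (φ₂ − φ₁)/V, Pe = |X|/2, and Φ(Pe) = B(2Pe) + Pe − 1. Then μ·((n₁ + n₂)/2)·(−(φ₂ − φ₁)/h) + D·(1 + Φ(Pe))·(n₂ − n₁)/h = (D/h)·(n₂·B(X) − n₁·B(−X)). -/
theorem sgBern_neg_aux (Z : ℝ) : sgBern (-Z) = sgBern Z + Z := by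
  unfold sgBern
  by_cases hZ : Z = 0
  · simp [hZ]
  · have h1 : Real.exp Z - 1 ≠ 0 := by
      intro h
      exact hZ (Real.exp_eq_one_iff Z |>.mp (by linarith))
    have h2 : Real.exp (-Z) - 1 ≠ 0 := by
      intro h
      exact hZ (neg_eq_zero.mp (Real.exp_eq_one_iff (-Z) |>.mp (by linarith)))
    have h3 : Real.exp Z * Real.exp (-Z) = 1 := by
      rw [← Real.exp_add]; simp
    rw [if_neg hZ, if_neg (neg_ne_zero.mpr hZ), div_add' _ _ _ h1, div_eq_div_iff h2 h1]
    linear_combination (-Z) * h3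

/-- Equivalence of the artificial-diffusion stabilized 1D flux with the classic
Scharfetter–Gummel difference formula, for arbitrary nodal densities `n₁, n₂`. -/
theorem sg_flux_eq_sg_formula
    (V μ h D φ₁ φ₂ n₁ n₂ X Pe : ℝ)
    (hV : 0 < V) (hμ : 0 < μ) (hh : 0 < h) (hD : D = μ * V)
    (hφ : φ₁ ≠ φ₂) (hX : X = (φ₂ - φ₁) / V) (hPe : Pe = |X| / 2) :
    μ * ((n₁ + n₂) / 2) * (-(φ₂ - φ₁) / h) +
        D * (1 + (sgBern (2 * Pe) + Pe - 1)) * ((n₂ - n₁) / h) =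
      (D / h) * (n₂ * sgBern X - n₁ * sgBern (-X)) := by
  have hd : φ₂ - φ₁ = X * V := by rw [hX]; field_simp
  have key : sgBern (2 * Pe) + Pe = sgBern X + X / 2 := by
    have e : 2 * Pe = |X| := by rw [hPe]; ring
    rw [e, hPe]
    rcases abs_choice X with hx | hx
    · rw [hx]
    · rw [hx, sgBern_neg_aux]; ring
  have key2 : 1 + (sgBern (2 * Pe) + Pe - 1) = sgBern X + X / 2 := by rw [key]; ring
  rw [key2, sgBern_neg_aux, hd, hD]
  ring
end
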